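/- The thickness of the complete tripartite graph K_{1,6,6} equals 2. -/

import Mathlib

open SimpleGraph

/-- A simple graph is planar if it admits a drawing in the plane: an injective
placement of vertices and, for each edge, an injective continuous arc joining
the images of its endpoints, such that arcs avoid vertex images in their
interiors and distinct arcs meet only at vertex images. -/
def IsPlanar {V : Type*} (G : SimpleGraph V) : Prop :=
  ∃ (f : V → ℝ × ℝ) (γ : G.edgeSet → (Set.Icc (0:ℝ) 1 → ℝ × ℝ)),
    Function.Injective f ∧
    (∀ e : G.edgeSet, Continuous (γ e)) ∧
    (∀ e : G.edgeSet, ∃ u v : V, (e : Sym2 V) = s(u, v) ∧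
      γ e ⟨0, by norm_num⟩ = f u ∧ γ e ⟨1, by norm_num⟩ = f v) ∧
    (∀ e : G.edgeSet, Function.Injective (γ e)) ∧
    (∀ e : G.edgeSet, ∀ t : Set.Icc (0:ℝ) 1, (t : ℝ) ≠ 0 → (t : ℝ) ≠ 1 →
      ∀ v : V, γ e t ≠ f v) ∧
    (∀ e e' : G.edgeSet, e ≠ e' → ∀ s t : Set.Icc (0:ℝ) 1,
      γ e s = γ e' t → γ e s ∈ Set.range f)

/-- The thickness of a graph: the least `n` such that `G` is the union of `n`
planar subgraphs. -/
noncomputable def thickness {V : Type*} (G : SimpleGraph V) : ℕ :=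
  sInf {n : ℕ | ∃ H : Fin n → SimpleGraph V,
    (∀ i, H i ≤ G) ∧ (∀ i, IsPlanar (H i)) ∧ (⨆ i, H i) = G}

/-! ### Straight line drawings -/

/-- Orientation determinant. -/
def crR (a b c : ℝ × ℝ) : ℝ := (b.1 - a.1) * (c.2 - a.2) - (b.2 - a.2) * (c.1 - a.1)

/-- Orientation determinant, integer version. -/
def crZ (a b c : ℤ × ℤ) : ℤ := (b.1 - a.1) * (c.2 - a.2) - (b.2 - a.2) * (c.1 - a.1)

def toR (a : ℤ × ℤ) : ℝ × ℝ := ((a.1 : ℝ), (a.2 : ℝ))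

lemma crR_toR (a b c : ℤ × ℤ) : crR (toR a) (toR b) (toR c) = (crZ a b c : ℝ) := by
  simp [crR, crZ, toR]

lemma crR_line (a b c d : ℝ × ℝ) (t : ℝ) :
    crR a b (AffineMap.lineMap c d t) = (1 - t) * crR a b c + t * crR a b d := by
  simp [crR, AffineMap.lineMap_apply]; ring

lemma crR_self (a b : ℝ × ℝ) : crR a b a = 0 := by simp [crR]
lemma crR_self' (a b : ℝ × ℝ) : crR a b b = 0 := by simp [crR]; ring

/-- A point of the segment. -/
def onSeg (a b p : ℝ × ℝ) : Prop := ∃ t : ℝ, 0 ≤ t ∧ t ≤ 1 ∧ p = AffineMap.lineMap a b t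

lemma onSeg_symm {a b p : ℝ × ℝ} (h : onSeg a b p) : onSeg b a p := by
  obtain ⟨t, h0, h1, rfl⟩ := h
  refine ⟨1 - t, by linarith, by linarith, ?_⟩
  rw [AffineMap.lineMap_apply_one_sub]

lemma onSeg_cr {a b p : ℝ × ℝ} (h : onSeg a b p) : crR a b p = 0 := by
  obtain ⟨t, h0, h1, rfl⟩ := h
  rw [crR_line, crR_self, crR_self']; ring

lemma onSeg_adj {a b c p : ℝ × ℝ} (h : onSeg a b p) (h' : onSeg a c p) (hc : crR a b c ≠ 0) :
    p = a := by
  have h1 := onSeg_cr h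
  obtain ⟨t, h0, h2, rfl⟩ := h'
  rw [crR_line, crR_self] at h1
  have : t = 0 := by
    have : t * crR a b c = 0 := by linarith
    exact (mul_eq_zero.1 this).resolve_right hc
  simp [this]

lemma onSeg_disj {a b c d p : ℝ × ℝ} (h : onSeg a b p) (h' : onSeg c d p)
    (hc : 0 < crR a b c * crR a b d) : False := by
  have h1 := onSeg_cr h
  obtain ⟨t, h0, h2, rfl⟩ := h'
  rw [crR_line] at h1
  have h3 : (1 - t) * (crR a b c * crR a b c) + t * (crR a b c * crR a b d) = 0 := by
    linear_combination crR a b c * h1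
  have hne : crR a b c ≠ 0 := by rintro h; simp [h] at hc
  have h4 : 0 < crR a b c * crR a b c := mul_self_pos.2 hne
  rcases eq_or_lt_of_le h0 with h | h
  · subst h; simp at h3; exact hne h3
  · have := mul_pos h hc
    have := mul_nonneg (sub_nonneg.2 h2) h4.le
    linarith

lemma planar_of_straight {V : Type*} (G : SimpleGraph V) (n : V → Fin 13)
    (hn : Function.Injective n) (P : Fin 13 → ℤ × ℤ) (T : Fin 13 → Fin 13 → Bool)
    (hT : ∀ u v, G.Adj u v → T (n u) (n v) = true)
    (h0 : ∀ i j, P i = P j → i = j)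
    (h1 : ∀ i j, T i j = true → ∀ k, k ≠ i → k ≠ j → crZ (P i) (P j) (P k) ≠ 0)
    (h2 : ∀ i j, T i j = true → ∀ k l, T k l = true → i ≠ k → i ≠ l → j ≠ k → j ≠ l →
      0 < crZ (P i) (P j) (P k) * crZ (P i) (P j) (P l) ∨
      0 < crZ (P k) (P l) (P i) * crZ (P k) (P l) (P j)) : IsPlanar G := by
  have rep : ∀ e : G.edgeSet, ∃ u v : V, (e : Sym2 V) = s(u, v) ∧ G.Adj u v := by
    rintro ⟨e, he⟩
    induction e with
    | _ u v => exact ⟨u, v, rfl, he⟩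
  choose a b hab hadj using rep
  let f : V → ℝ × ℝ := fun v => toR (P (n v))
  have hinj : Function.Injective f := by
    intro u v h
    apply hn; apply h0
    simp only [f, toR, Prod.mk.injEq, Int.cast_inj] at h
    exact Prod.ext h.1 h.2
  have k1 : ∀ u v w, G.Adj u v → w ≠ u → w ≠ v → crR (f u) (f v) (f w) ≠ 0 := by
    intro u v w h hu hv
    simp only [f, crR_toR]
    exact_mod_cast h1 _ _ (hT u v h) _ (hn.ne hu) (hn.ne hv)
  have k2 : ∀ u v w x p, G.Adj u v → G.Adj w x → s(u, v) ≠ s(w, x) →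
      onSeg (f u) (f v) p → onSeg (f w) (f x) p → p ∈ Set.range f := by
    intro u v w x p huv hwx hne hp hp'
    by_cases c1 : u = w
    · subst c1
      have : x ≠ v := by rintro rfl; exact hne rfl
      exact ⟨u, (onSeg_adj hp hp' (k1 _ _ _ huv hwx.ne' this)).symm⟩
    by_cases c2 : u = x
    · subst c2
      have : w ≠ v := by rintro rfl; exact hne Sym2.eq_swap
      exact ⟨u, (onSeg_adj hp (onSeg_symm hp') (k1 _ _ _ huv hwx.ne this)).symm⟩
    by_cases c3 : v = w
    · subst c3
      exact ⟨v, (onSeg_adj (onSeg_symm hp) hp' (k1 _ _ _ huv.symm hwx.ne' (Ne.symm c2))).symm⟩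
    by_cases c4 : v = x
    · subst c4
      exact ⟨v, (onSeg_adj (onSeg_symm hp) (onSeg_symm hp')
        (k1 _ _ _ huv.symm hwx.ne (Ne.symm c1))).symm⟩
    exfalso
    rcases h2 _ _ (hT u v huv) _ _ (hT w x hwx) (hn.ne c1) (hn.ne c2) (hn.ne c3) (hn.ne c4)
      with h | h
    · apply onSeg_disj hp hp'
      simp only [f, crR_toR]
      exact_mod_cast h
    · apply onSeg_disj hp' hp
      simp only [f, crR_toR]
      exact_mod_cast h
  refine ⟨f, fun e t => AffineMap.lineMap (f (a e)) (f (b e)) (t : ℝ), hinj, ?_, ?_, ?_, ?_, ?_⟩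
  · intro e
    exact AffineMap.lineMap_continuous.comp continuous_subtype_val
  · intro e
    exact ⟨a e, b e, hab e, by simp, by simp⟩
  · intro e s t h
    have := AffineMap.lineMap_injective ℝ (hinj.ne (hadj e).ne) h
    exact Subtype.ext this
  · intro e t ht0 ht1 v hv
    have hs : onSeg (f (a e)) (f (b e)) (f v) := ⟨t, t.2.1, t.2.2, hv.symm⟩
    by_cases c1 : v = a e
    · apply ht0
      apply AffineMap.lineMap_injective ℝ (hinj.ne (hadj e).ne)
      simp only [hv, AffineMap.lineMap_apply_zero, c1]
    by_cases c2 : v = b e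
    · apply ht1
      apply AffineMap.lineMap_injective ℝ (hinj.ne (hadj e).ne)
      simp only [hv, AffineMap.lineMap_apply_one, c2]
    exact k1 _ _ _ (hadj e) c1 c2 (onSeg_cr hs)
  · intro e e' hne s t h
    refine k2 _ _ _ _ _ (hadj e) (hadj e') ?_ ⟨s, s.2.1, s.2.2, rfl⟩ ⟨t, t.2.1, t.2.2, h⟩
    rw [← hab, ← hab]
    exact fun h => hne (Subtype.ext h)

/-! ### The decomposition -/

def coordA : Fin 13 → ℤ × ℤ := ![(0, 0), (1, 11), (4, 16), (27, 1), (14, 13), (34, 1), (2, 14),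
  (0, 50), (6, 10), (2, 10), (50, 0), (25, 3), (1, 18)]

def coordB : Fin 13 → ℤ × ℤ := ![(7, 33), (0, 0), (30, 8), (3, 28), (4, 32), (5, 31), (15, 19),
  (6, 19), (0, 50), (3, 34), (50, 0), (24, 7), (4, 31)]

/-- Neighbour lists of the first layer, larger endpoints only. -/
def nbrA : Fin 13 → List (Fin 13) := ![[1, 2, 3, 4, 7, 9, 10, 11, 12], [9, 12], [7, 8, 9, 12],
  [10, 11], [7, 8, 10, 11], [10, 11], [9, 12], [], [], [], [], [], []]

/-- Neighbour lists of the second layer, larger endpoints only. -/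
def nbrB : Fin 13 → List (Fin 13) := ![[5, 6, 8], [7, 8, 10, 11], [10, 11], [7, 8, 9, 12],
  [9, 12], [7, 8, 9, 12], [7, 8, 10, 11], [], [], [], [], [], []]

def tabA (i j : Fin 13) : Bool := (nbrA i).contains j || (nbrA j).contains i
def tabB (i j : Fin 13) : Bool := (nbrB i).contains j || (nbrB j).contains i

abbrev VV := (i : Fin 3) × (![Fin 1, Fin 6, Fin 6] i : Type)

def num : VV → Fin 13
  | ⟨0, _⟩ => 0
  | ⟨1, x⟩ => ⟨1 + (show Fin 6 from x).val, by have := (show Fin 6 from x).2; omega⟩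
  | ⟨2, x⟩ => ⟨7 + (show Fin 6 from x).val, by have := (show Fin 6 from x).2; omega⟩

def part (i : Fin 13) : ℕ := if i.val = 0 then 0 else if i.val < 7 then 1 else 2

lemma part_num (v : VV) : part (num v) = v.1.val := by
  obtain ⟨i, x⟩ := v
  fin_cases i
  · rfl
  · change Fin 6 at x
    fin_cases x <;> rfl
  · simp [num, part]

lemma num_inj : Function.Injective num := by
  intro u v h
  have hp : u.1 = v.1 := by
    apply Fin.ext; rw [← part_num, ← part_num, h]
  obtain ⟨i, x⟩ := u
  obtain ⟨j, y⟩ := v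
  obtain rfl : i = j := hp
  congr 1
  fin_cases i
  · exact Subsingleton.elim (α := Fin 1) x y
  · apply Fin.ext (n := 6)
    have := congrArg Fin.val h
    simpa [num] using this
  · apply Fin.ext (n := 6)
    have := congrArg Fin.val h
    simpa [num] using this

def layer (T : Fin 13 → Fin 13 → Bool) (h : ∀ i j, T i j = T j i) (h' : ∀ i, T i i = false) :
    SimpleGraph VV where
  Adj u v := T (num u) (num v) = true
  symm := ⟨fun u v huv => by rw [h]; exact huv⟩
  loopless := ⟨fun u huv => by simp [h'] at huv⟩

def layers : Fin 2 → SimpleGraph VV :=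
  ![layer tabA (by decide +kernel) (by decide +kernel),
    layer tabB (by decide +kernel) (by decide +kernel)]

lemma tab_part : ∀ i j, (tabA i j = true ∨ tabB i j = true) ↔ part i ≠ part j := by
  decide +kernel

lemma adj_iff (u v : VV) : (completeMultipartiteGraph ![Fin 1, Fin 6, Fin 6]).Adj u v ↔
    tabA (num u) (num v) = true ∨ tabB (num u) (num v) = true := by
  rw [tab_part, part_num, part_num]
  simp [Fin.ext_iff]

lemma upper : ∃ H : Fin 2 → SimpleGraph VV,
    (∀ i, H i ≤ completeMultipartiteGraph ![Fin 1, Fin 6, Fin 6]) ∧ (∀ i, IsPlanar (H i)) ∧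
    (⨆ i, H i) = completeMultipartiteGraph ![Fin 1, Fin 6, Fin 6] := by
  refine ⟨layers, ?_, ?_, ?_⟩
  · intro i u v h
    rw [adj_iff]
    fin_cases i
    · exact Or.inl h
    · exact Or.inr h
  · intro i
    fin_cases i
    · refine planar_of_straight _ num num_inj coordA tabA (fun u v h => h) ?_ ?_ ?_ <;>
        decide +kernel
    · refine planar_of_straight _ num num_inj coordB tabB (fun u v h => h) ?_ ?_ ?_ <;>
        decide +kernel
  · ext u v
    rw [adj_iff, SimpleGraph.iSup_adj, Fin.exists_fin_two]
    rfl

/-! ### Nonplanarity of K33 -/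

lemma exists_log {A : Type*} [TopologicalSpace A] [SimplyConnectedSpace A]
    [LocallyPathConnectedSpace A] [Nonempty A] (g : A → ℂ) (hg : Continuous g)
    (h0 : ∀ x, g x ≠ 0) : ∃ L : A → ℂ, Continuous L ∧ ∀ x, Complex.exp (L x) = g x := by
  obtain ⟨x₀⟩ := ‹Nonempty A›
  obtain ⟨F, ⟨-, hF⟩, -⟩ := Complex.isCoveringMapOn_exp.existsUnique_continuousMap_lifts
    (⟨g, hg⟩ : C(A, ℂ)) (a₀ := x₀) (Complex.exp_log (h0 x₀)) (fun x => h0 x)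
  exact ⟨F, F.continuous, fun x => congrFun hF x⟩

/-- The change of a logarithm along a path does not depend on the branch. -/
lemma log_change (L M : ℝ → ℂ) (hL : Continuous L) (hM : Continuous M) (c : ℂ)
    (h : ∀ t, Complex.exp (L t) = c * Complex.exp (M t)) : L 1 - L 0 = M 1 - M 0 := by
  have hc : c ≠ 0 := by
    rintro rfl
    have := h 0
    simp at this
  have key : ∀ t, ∃ n : ℤ, L t - M t - Complex.log c = n * (2 * Real.pi * Complex.I) := by
    intro t
    rw [← Complex.exp_eq_one_iff, Complex.exp_sub, Complex.exp_sub, h, Complex.exp_log hc]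
    field_simp
  choose n hn using key
  have hpi : (2 * Real.pi * Complex.I : ℂ) ≠ 0 := Complex.two_pi_I_ne_zero
  have hcont : Continuous (fun t => (n t : ℝ)) := by
    have : (fun t => (n t : ℝ)) =
        fun t => ((L t - M t - Complex.log c) / (2 * Real.pi * Complex.I)).re := by
      funext t
      rw [hn t, mul_div_cancel_right₀ _ hpi]
      simp
    rw [this]
    fun_prop
  have hcont' : Continuous n := Int.isClosedEmbedding_coe_real.isInducing.continuous_iff.2 hcont
  have : n 0 = n 1 := PreconnectedSpace.constant inferInstance hcont'
  have h0 := hn 0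
  have h1 := hn 1
  rw [this] at h0
  linear_combination h1 - h0

lemma no_K33 (a b : Fin 3 → ℂ) (g : Fin 3 → Fin 3 → ℝ → ℂ) (hg : ∀ i j, Continuous (g i j))
    (g0 : ∀ i j, g i j 0 = a i) (g1 : ∀ i j, g i j 1 = b j)
    (hd : ∀ i j k l, i ≠ k → j ≠ l → ∀ s t, g i j s ≠ g k l t) : False := by
  have oth : ∀ j : Fin 3, ∃ l, l ≠ j := by decide
  have hag : ∀ i k l t, i ≠ k → a i ≠ g k l t := by
    intro i k l t h
    obtain ⟨j, hj⟩ := oth l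
    rw [← g0 i j]
    exact hd _ _ _ _ h hj _ _
  have hbg : ∀ j k l t, j ≠ l → b j ≠ g k l t := by
    intro j k l t h
    obtain ⟨i, hi⟩ := oth k
    rw [← g1 i j]
    exact hd _ _ _ _ hi h _ _
  have haa : ∀ i k, i ≠ k → a i ≠ a k := fun i k h => by
    rw [← g0 k 0]; exact hag _ _ _ _ h
  have hbb : ∀ i k, i ≠ k → b i ≠ b k := fun i k h => by
    rw [← g1 0 k]; exact hbg _ _ _ _ h
  have hab : ∀ i j, a i ≠ b j := fun i j => by
    obtain ⟨k, hk⟩ := oth i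
    rw [← g1 k j]; exact hag _ _ _ _ hk.symm
  -- logs along the edges
  have exA : ∀ i k l, ∃ M : ℝ → ℂ, i ≠ k → Continuous M ∧
      ∀ t, Complex.exp (M t) = g k l t - a i := by
    intro i k l
    by_cases h : i = k
    · exact ⟨0, fun h' => absurd h h'⟩
    · obtain ⟨M, h1, h2⟩ := exists_log (fun t => g k l t - a i) ((hg k l).sub continuous_const)
        (fun t => sub_ne_zero.2 (hag i k l t h).symm)
      exact ⟨M, fun _ => ⟨h1, h2⟩⟩
  have exB : ∀ j k l, ∃ M : ℝ → ℂ, j ≠ l → Continuous M ∧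
      ∀ t, Complex.exp (M t) = g k l t - b j := by
    intro j k l
    by_cases h : j = l
    · exact ⟨0, fun h' => absurd h h'⟩
    · obtain ⟨M, h1, h2⟩ := exists_log (fun t => g k l t - b j) ((hg k l).sub continuous_const)
        (fun t => sub_ne_zero.2 (hbg j k l t h).symm)
      exact ⟨M, fun _ => ⟨h1, h2⟩⟩
  choose MA hMA using exA
  choose MB hMB using exB
  have sq : ∀ i j k l, i ≠ k → j ≠ l →
      (MA i k l 1 - MA i k l 0) + (MB l i j 1 - MB l i j 0) =
      (MA k i j 1 - MA k i j 0) + (MB j k l 1 - MB j k l 0) := by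
    intro i j k l hik hjl
    obtain ⟨L, hL, hLe⟩ := exists_log (fun x : ℝ × ℝ => g k l x.2 - g i j x.1)
      (((hg k l).comp continuous_snd).sub ((hg i j).comp continuous_fst))
      (fun x => sub_ne_zero.2 (hd _ _ _ _ hik hjl _ _).symm)
    have e1 := log_change (fun t => L (0, t)) (MA i k l) (by fun_prop) (hMA i k l hik).1 1
      (fun t => by rw [hLe, (hMA i k l hik).2]; simp [g0])
    have e2 := log_change (fun t => L (1, t)) (MB j k l) (by fun_prop) (hMB j k l hjl).1 1
      (fun t => by rw [hLe, (hMB j k l hjl).2]; simp [g1])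
    have e3 := log_change (fun t => L (t, 0)) (MA k i j) (by fun_prop) (hMA k i j hik.symm).1 (-1)
      (fun t => by rw [hLe, (hMA k i j hik.symm).2]; simp [g0])
    have e4 := log_change (fun t => L (t, 1)) (MB l i j) (by fun_prop) (hMB l i j hjl.symm).1 (-1)
      (fun t => by rw [hLe, (hMB l i j hjl.symm).2]; simp [g1])
    linear_combination -e1 + e2 + e3 - e4
  -- angle choices; order a 0 < a 1 < a 2 < b 0 < b 1 < b 2
  let S : ℂ := Real.pi * Complex.I
  have hS : S ≠ 0 := by simp [S, Real.pi_ne_zero]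
  have eS : Complex.exp S = -1 := Complex.exp_pi_mul_I
  -- logarithm of b j - a i
  let θ : Fin 3 → Fin 3 → ℂ := fun i j => Complex.log (b j - a i)
  have hθ : ∀ i j, Complex.exp (θ i j) = b j - a i := fun i j =>
    Complex.exp_log (sub_ne_zero.2 (hab i j).symm)
  -- logarithm of a k - a i
  let α : Fin 3 → Fin 3 → ℂ := fun i k =>
    if i < k then Complex.log (a k - a i) else Complex.log (a i - a k) + S
  have hα : ∀ i k, i ≠ k → Complex.exp (α i k) = a k - a i := by
    intro i k h
    simp only [α]
    split_ifs
    · exact Complex.exp_log (sub_ne_zero.2 (haa _ _ h).symm)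
    · rw [Complex.exp_add, Complex.exp_log (sub_ne_zero.2 (haa _ _ h)), eS]; ring
  let β : Fin 3 → Fin 3 → ℂ := fun i k =>
    if i < k then Complex.log (b k - b i) else Complex.log (b i - b k) + S
  have hβ : ∀ i k, i ≠ k → Complex.exp (β i k) = b k - b i := by
    intro i k h
    simp only [β]
    split_ifs
    · exact Complex.exp_log (sub_ne_zero.2 (hbb _ _ h).symm)
    · rw [Complex.exp_add, Complex.exp_log (sub_ne_zero.2 (hbb _ _ h)), eS]; ring
  have nA : ∀ i k l, ∃ n : ℤ, i ≠ k →
      MA i k l 1 - MA i k l 0 = θ i l - α i k + 2 * n * S := by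
    intro i k l
    by_cases h : i = k
    · exact ⟨0, fun h' => absurd h h'⟩
    have hM := (hMA i k l h).2
    have : Complex.exp (MA i k l 1 - MA i k l 0 - (θ i l - α i k)) = 1 := by
      have p1 : b l - a i ≠ 0 := sub_ne_zero.2 (hab i l).symm
      have p2 : a k - a i ≠ 0 := sub_ne_zero.2 (haa _ _ h).symm
      rw [Complex.exp_sub, Complex.exp_sub, Complex.exp_sub, hM, hM, hθ, hα i k h, g0, g1]
      field_simp
    obtain ⟨n, hn⟩ := Complex.exp_eq_one_iff.1 this
    exact ⟨n, fun _ => by simp only [S]; linear_combination hn⟩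
  have nB : ∀ j k l, ∃ n : ℤ, j ≠ l →
      MB j k l 1 - MB j k l 0 = β j l - (θ k j + S) + 2 * n * S := by
    intro j k l
    by_cases h : j = l
    · exact ⟨0, fun h' => absurd h h'⟩
    have hM := (hMB j k l h).2
    have : Complex.exp (MB j k l 1 - MB j k l 0 - (β j l - (θ k j + S))) = 1 := by
      have p1 : b j - a k ≠ 0 := sub_ne_zero.2 (hab k j).symm
      have p2 : b l - b j ≠ 0 := sub_ne_zero.2 (hbb _ _ h).symm
      have p3 : a k - b j ≠ 0 := sub_ne_zero.2 (hab k j)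
      rw [Complex.exp_sub, Complex.exp_sub, Complex.exp_sub, Complex.exp_add,
        hM, hM, hθ, hβ j l h, g0, g1, eS]
      rw [show (b j - a k) * (-1 : ℂ) = a k - b j by ring]
      field_simp
    obtain ⟨n, hn⟩ := Complex.exp_eq_one_iff.1 this
    exact ⟨n, fun _ => by simp only [S]; linear_combination hn⟩
  choose p hp using nA
  choose q hq using nB
  have eqn : ∀ i j k l, i < k → j ≠ l →
      2 * p i k l + 2 * q l i j + (1 + (if j < l then 1 else -1)) =
      2 * p k i j + 2 * q j k l := by
    intro i j k l hik hjl
    have h := sq i j k l hik.ne hjl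
    rw [hp _ _ _ hik.ne, hp _ _ _ hik.ne', hq _ _ _ hjl, hq _ _ _ hjl.symm] at h
    have hα' : α k i = α i k + S := by simp [α, hik, hik.not_gt]
    have hβ' : β l j = β j l + (if j < l then 1 else -1) * S := by
      rcases lt_or_gt_of_ne hjl with h | h
      · simp [β, h, h.not_gt]
      · simp [β, h, h.not_gt]
    rw [hα', hβ'] at h
    have h' : ((2 * p i k l + 2 * q l i j + (1 + (if j < l then 1 else -1)) : ℤ) : ℂ) * S =
      ((2 * p k i j + 2 * q j k l : ℤ) : ℂ) * S := by
      push_cast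
      linear_combination h
    exact_mod_cast mul_right_cancel₀ hS h'
  have x1 := eqn 0 0 1 1 (by decide) (by decide)
  have x2 := eqn 0 0 1 2 (by decide) (by decide)
  have x3 := eqn 0 1 1 0 (by decide) (by decide)
  have x4 := eqn 0 1 1 2 (by decide) (by decide)
  have x5 := eqn 0 2 1 0 (by decide) (by decide)
  have x6 := eqn 0 2 1 1 (by decide) (by decide)
  have y1 := eqn 0 0 2 1 (by decide) (by decide)
  have y2 := eqn 0 0 2 2 (by decide) (by decide)
  have y3 := eqn 0 1 2 0 (by decide) (by decide)
  have y4 := eqn 0 1 2 2 (by decide) (by decide)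
  have y5 := eqn 0 2 2 0 (by decide) (by decide)
  have y6 := eqn 0 2 2 1 (by decide) (by decide)
  have z1 := eqn 1 0 2 1 (by decide) (by decide)
  have z2 := eqn 1 0 2 2 (by decide) (by decide)
  have z3 := eqn 1 1 2 0 (by decide) (by decide)
  have z4 := eqn 1 1 2 2 (by decide) (by decide)
  have z5 := eqn 1 2 2 0 (by decide) (by decide)
  have z6 := eqn 1 2 2 1 (by decide) (by decide)
  simp at x1 x2 x3 x4 x5 x6 y1 y2 y3 y4 y5 y6 z1 z2 z3 z4 z5 z6
  omega

lemma not_planar : ¬ IsPlanar (completeMultipartiteGraph ![Fin 1, Fin 6, Fin 6]) := by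
  rintro ⟨f, γ, hf, hc, hend, -, hint, hdis⟩
  let c6 : Fin 3 → Fin 6 := Fin.castLE (by norm_num)
  have hc6 : Function.Injective c6 := Fin.castLE_injective _
  let A : Fin 3 → VV := fun i => ⟨1, c6 i⟩
  let B : Fin 3 → VV := fun i => ⟨2, c6 i⟩
  have hA : ∀ i k, A i = A k → i = k := by
    intro i k h
    exact hc6 (eq_of_heq (Sigma.mk.inj h).2)
  have hB : ∀ i k, B i = B k → i = k := by
    intro i k h
    exact hc6 (eq_of_heq (Sigma.mk.inj h).2)
  have hAB : ∀ i k, A i ≠ B k := by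
    intro i k h
    have := congrArg Sigma.fst h
    simp [A, B] at this
  let e : Fin 3 → Fin 3 → (completeMultipartiteGraph ![Fin 1, Fin 6, Fin 6]).edgeSet :=
    fun i j => ⟨s(A i, B j), by simp [A, B]⟩
  have hmem : ∀ d s v, γ d s = f v → v ∈ (d : Sym2 VV) := by
    intro d s v h
    obtain ⟨u, w, hd, h0, h1⟩ := hend d
    by_cases hs0 : (s : ℝ) = 0
    · have : s = ⟨0, by norm_num⟩ := Subtype.ext hs0
      rw [this, h0] at h
      rw [hd, ← hf h]; simp
    by_cases hs1 : (s : ℝ) = 1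
    · have : s = ⟨1, by norm_num⟩ := Subtype.ext hs1
      rw [this, h1] at h
      rw [hd, ← hf h]; simp
    exact absurd h (hint d s hs0 hs1 v)
  have hex : ∀ i j, ∃ h : ℝ → ℝ × ℝ, Continuous h ∧ h 0 = f (A i) ∧ h 1 = f (B j) ∧
      ∀ t, ∃ s, h t = γ (e i j) s := by
    intro i j
    obtain ⟨u, w, hd, h0, h1⟩ := hend (e i j)
    have hd' : s(A i, B j) = s(u, w) := hd
    have hp0 : Set.projIcc (0:ℝ) 1 zero_le_one 0 = ⟨0, by norm_num⟩ := by
      simp [Set.projIcc_left]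
    have hp1 : Set.projIcc (0:ℝ) 1 zero_le_one 1 = ⟨1, by norm_num⟩ := by
      simp [Set.projIcc_right]
    rw [Sym2.eq_iff] at hd'
    rcases hd' with ⟨hu, hw⟩ | ⟨hu, hw⟩
    · refine ⟨fun t => γ (e i j) (Set.projIcc (0:ℝ) 1 zero_le_one t),
        (hc _).comp continuous_projIcc, ?_, ?_, fun t => ⟨_, rfl⟩⟩
      · simp only [hp0, h0, hu]
      · simp only [hp1, h1, hw]
    · refine ⟨fun t => γ (e i j) (Set.projIcc (0:ℝ) 1 zero_le_one (1 - t)),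
        (hc _).comp (continuous_projIcc.comp (by fun_prop)), ?_, ?_, fun t => ⟨_, rfl⟩⟩
      · simp only [sub_zero, hp1, h1, hu]
      · simp only [sub_self, hp0, h0, hw]
  choose h hh h0 h1 hs using hex
  let Φ : ℝ × ℝ → ℂ := fun x => Complex.equivRealProdCLM.symm x
  have hΦ : Continuous Φ := Complex.equivRealProdCLM.symm.continuous
  have hΦi : Function.Injective Φ := Complex.equivRealProdCLM.symm.injective
  refine no_K33 (fun i => Φ (f (A i))) (fun j => Φ (f (B j))) (fun i j t => Φ (h i j t))
    (fun i j => hΦ.comp (hh i j)) (fun i j => by simp only [h0]) (fun i j => by simp only [h1]) ?_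
  intro i j k l hik hjl s t heq
  have heq := hΦi heq
  obtain ⟨s', hs'⟩ := hs i j s
  obtain ⟨t', ht'⟩ := hs k l t
  rw [hs', ht'] at heq
  have hne : e i j ≠ e k l := by
    intro h
    have h : s(A i, B j) = s(A k, B l) := congrArg Subtype.val h
    rw [Sym2.eq_iff] at h
    rcases h with ⟨h, -⟩ | ⟨h, -⟩
    · exact hik (hA _ _ h)
    · exact hAB _ _ h
  obtain ⟨v, hv⟩ := hdis _ _ hne s' t' heq
  have m1 : v ∈ s(A i, B j) := hmem (e i j) s' v hv.symm
  have m2 : v ∈ s(A k, B l) := hmem (e k l) t' v (heq ▸ hv.symm)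
  rw [Sym2.mem_iff] at m1 m2
  rcases m1 with rfl | rfl <;> rcases m2 with m | m
  · exact hik (hA _ _ m)
  · exact hAB _ _ m
  · exact hAB _ _ m.symm
  · exact hjl (hB _ _ m)

theorem thickness_K166 :
    thickness (completeMultipartiteGraph ![Fin 1, Fin 6, Fin 6]) = 2 := by
  unfold thickness
  apply le_antisymm
  · exact Nat.sInf_le upper
  · refine le_csInf ⟨2, upper⟩ ?_
    rintro n ⟨H, -, hP, hU⟩
    by_contra hn
    have hn : n = 0 ∨ n = 1 := by omega
    rcases hn with rfl | rfl
    · rw [iSup_of_empty] at hU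
      have : (completeMultipartiteGraph ![Fin 1, Fin 6, Fin 6]).Adj
        ⟨0, (0 : Fin 1)⟩ ⟨1, (0 : Fin 6)⟩ := by simp
      rw [← hU] at this
      exact this
    · rw [iSup_unique] at hU
      exact not_planar (hU ▸ hP default)
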